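/- Let X be a nonempty compact metric space, Λ a compact metric space, and w : Λ × X → X a weakly hyperbolic IFS. Then the Hutchinson–Barnsley operator F has a global attractor K ∈ K(X): there exists a nonempty compact set K ⊆ X with F(K) = K such that Fⁿ(B) → K in the Hausdorff metric for every nonempty compact set B ⊆ X. -/

import Mathlib

open Metric Set Filter Topology

/-- `seqComp w σ n = w_{σ₁} ∘ ⋯ ∘ w_{σₙ}` (with `σ i` denoting `σ_{i+1}`). -/
def seqComp {Λ X : Type*} (w : Λ → X → X) (σ : ℕ → Λ) : ℕ → X → X
  | 0 => id
  | n + 1 => seqComp w σ n ∘ w (σ n)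

/-- The Hutchinson–Barnsley operator on sets: `F(A) = w(Λ × A)`. -/
def HBset {Λ X : Type*} (w : Λ → X → X) (A : Set X) : Set X :=
  (fun p : Λ × X => w p.1 p.2) '' (Set.univ ×ˢ A)

/-!
The diameters `diam (w_{σ₁⋯σₙ}(X))` depend continuously on the address `σ` and decrease with `n`, so
by Dini's theorem on the compact space `Λ^ℕ` weak hyperbolicity makes them tend to `0` uniformly
in `σ`. Since `Fⁿ(A)` is the union over `σ` of the sets `w_{σ₁⋯σₙ}(A)`, for any nonempty `A` and `B`
the Hausdorff distance between `Fⁿ(A)` and `Fⁿ(B)` is at most the supremum of these diameters.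
Taking for `A` the invariant set `⋂ n, Fⁿ(X)` gives the convergence.
-/

theorem image_iInter_of_directed {ι Y Z : Type*} [Nonempty ι] [TopologicalSpace Y]
    [TopologicalSpace Z] [T1Space Z] {f : Y → Z} (hf : Continuous f) {A : ι → Set Y}
    (hdir : Directed (· ⊇ ·) A) (hcompact : ∀ i, IsCompact (A i)) (hclosed : ∀ i, IsClosed (A i)) :
    f '' ⋂ i, A i = ⋂ i, f '' A i := by
  refine (image_iInter_subset A f).antisymm fun z hz => ?_
  have hfiber : IsClosed (f ⁻¹' {z}) := isClosed_singleton.preimage hf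
  obtain ⟨y, hy⟩ : (⋂ i, A i ∩ f ⁻¹' {z}).Nonempty := by
    refine IsCompact.nonempty_iInter_of_directed_nonempty_isCompact_isClosed _
      (fun i j => (hdir i j).imp fun _ h =>
        ⟨inter_subset_inter_left _ h.1, inter_subset_inter_left _ h.2⟩) (fun i => ?_)
      (fun i => (hcompact i).inter_right hfiber) (fun i => (hclosed i).inter hfiber)
    obtain ⟨y, hyA, hyz⟩ := mem_iInter.1 hz i
    exact ⟨y, hyA, hyz⟩
  rw [← iInter_inter] at hy
  exact ⟨y, hy.1, hy.2⟩

theorem lipschitzWith_diam_range {X Y : Type*} [TopologicalSpace X] [CompactSpace X]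
    [PseudoMetricSpace Y] : LipschitzWith 2 fun f : C(X, Y) => diam (range f) := by
  refine LipschitzWith.of_le_add_mul 2 fun f g => ?_
  have hg : Bornology.IsBounded (range g) := (isCompact_range g.continuous).isBounded
  refine diam_le_of_forall_dist_le (by positivity) ?_
  rintro _ ⟨x, rfl⟩ _ ⟨y, rfl⟩
  calc dist (f x) (f y) ≤ dist (f x) (g x) + dist (g x) (g y) + dist (g y) (f y) :=
        dist_triangle4 _ _ _ _
    _ ≤ dist f g + diam (range g) + dist f g := by
        gcongr
        · exact ContinuousMap.dist_apply_le_dist x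
        · exact dist_le_diam_of_mem hg (mem_range_self x) (mem_range_self y)
        · rw [dist_comm]
          exact ContinuousMap.dist_apply_le_dist y
    _ = diam (range g) + (2 : NNReal) * dist f g := by push_cast; ring

section Compositions

variable {Λ X : Type*} {w : Λ → X → X}

theorem seqComp_congr {σ τ : ℕ → Λ} {n : ℕ} (h : ∀ i < n, σ i = τ i) :
    seqComp w σ n = seqComp w τ n := by
  induction n with
  | zero => rfl
  | succ n ih =>
    simp only [seqComp, h n n.lt_succ_self, ih fun i hi => h i (hi.trans n.lt_succ_self)]

theorem antitone_range_seqComp (σ : ℕ → Λ) : Antitone fun n => range (seqComp w σ n) :=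
  antitone_nat_of_succ_le fun n => range_comp_subset_range (w (σ n)) (seqComp w σ n)

theorem continuous_seqComp [TopologicalSpace Λ] [TopologicalSpace X]
    (hw : Continuous fun p : Λ × X => w p.1 p.2) (n : ℕ) :
    Continuous fun p : (ℕ → Λ) × X => seqComp w p.1 n p.2 := by
  induction n with
  | zero => exact continuous_snd
  | succ n ih =>
    have hstep : Continuous fun p : (ℕ → Λ) × X => w (p.1 n) p.2 :=
      hw.comp (f := fun p : (ℕ → Λ) × X => (p.1 n, p.2)) (by fun_prop)
    exact ih.comp (continuous_fst.prodMk hstep)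

theorem continuous_diam_range_seqComp [TopologicalSpace Λ] [PseudoMetricSpace X] [CompactSpace X]
    (hw : Continuous fun p : Λ × X => w p.1 p.2) (n : ℕ) :
    Continuous fun σ : ℕ → Λ => diam (range (seqComp w σ n)) := by
  let F : C(ℕ → Λ, C(X, X)) :=
    ContinuousMap.curry ⟨fun p => seqComp w p.1 n p.2, continuous_seqComp hw n⟩
  have hF : Continuous fun σ => diam (range (F σ)) :=
    (lipschitzWith_diam_range (X := X) (Y := X)).continuous.comp F.continuous
  exact hF

theorem tendstoUniformly_diam_range_seqComp [TopologicalSpace Λ] [CompactSpace Λ]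
    [PseudoMetricSpace X] [CompactSpace X] (hw : Continuous fun p : Λ × X => w p.1 p.2)
    (hdiam : ∀ σ : ℕ → Λ, Tendsto (fun n => diam (range (seqComp w σ n))) atTop (𝓝 0)) :
    TendstoUniformly (fun n (σ : ℕ → Λ) => diam (range (seqComp w σ n))) 0 atTop :=
  Antitone.tendstoUniformly_of_forall_tendsto (continuous_diam_range_seqComp hw)
    (fun _ _ hmn σ => diam_mono (antitone_range_seqComp σ hmn) isBounded_of_compactSpace)
    continuous_const hdiam

end Compositions

namespace HBset

section Iterates

variable {Λ X : Type*} {w : Λ → X → X}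

protected theorem monotone (w : Λ → X → X) : Monotone (HBset w) :=
  fun _ _ h => image_mono (prod_mono_right h)

theorem antitone_iterate_univ (w : Λ → X → X) : Antitone fun n => (HBset w)^[n] univ :=
  (HBset.monotone w).antitone_iterate_of_map_le (subset_univ _)

protected theorem isCompact [TopologicalSpace Λ] [CompactSpace Λ] [TopologicalSpace X]
    (hw : Continuous fun p : Λ × X => w p.1 p.2) {A : Set X} (hA : IsCompact A) :
    IsCompact (HBset w A) :=
  (isCompact_univ.prod hA).image hw

theorem isCompact_iterate [TopologicalSpace Λ] [CompactSpace Λ] [TopologicalSpace X]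
    (hw : Continuous fun p : Λ × X => w p.1 p.2) {A : Set X} (hA : IsCompact A) (n : ℕ) :
    IsCompact ((HBset w)^[n] A) :=
  Function.Iterate.rec IsCompact hA (fun _ => HBset.isCompact hw) n

variable [Nonempty Λ]

theorem mem_iterate_iff {n : ℕ} {A : Set X} {x : X} :
    x ∈ (HBset w)^[n] A ↔ ∃ σ : ℕ → Λ, ∃ a ∈ A, seqComp w σ n a = x := by
  induction n generalizing A with
  | zero => simp [seqComp]
  | succ n ih =>
    rw [Function.iterate_succ_apply, ih]
    constructor
    · rintro ⟨σ, _, ⟨⟨l, a⟩, ⟨-, ha⟩, rfl⟩, rfl⟩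
      have hcongr : seqComp w (Function.update σ n l) n = seqComp w σ n :=
        seqComp_congr fun i hi => Function.update_of_ne hi.ne _ _
      exact ⟨Function.update σ n l, a, ha, by simp [seqComp, hcongr]⟩
    · rintro ⟨σ, a, ha, rfl⟩
      exact ⟨σ, w (σ n) a, ⟨(σ n, a), ⟨mem_univ _, ha⟩, rfl⟩, rfl⟩

theorem nonempty_iterate {A : Set X} (hA : A.Nonempty) (n : ℕ) : ((HBset w)^[n] A).Nonempty :=
  let ⟨a, ha⟩ := hA
  ⟨_, mem_iterate_iff.2 ⟨fun _ => Classical.arbitrary Λ, a, ha, rfl⟩⟩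

theorem exists_mem_iterate_dist_le [PseudoMetricSpace X] [BoundedSpace X] {n : ℕ} {C : ℝ}
    (hC : ∀ σ : ℕ → Λ, diam (range (seqComp w σ n)) ≤ C) {A B : Set X} (hB : B.Nonempty) {x : X}
    (hx : x ∈ (HBset w)^[n] A) : ∃ y ∈ (HBset w)^[n] B, dist x y ≤ C := by
  obtain ⟨σ, a, -, rfl⟩ := mem_iterate_iff.1 hx
  obtain ⟨b, hb⟩ := hB
  exact ⟨seqComp w σ n b, mem_iterate_iff.2 ⟨σ, b, hb, rfl⟩,
    (dist_le_diam_of_mem (Bornology.IsBounded.all _) (mem_range_self a) (mem_range_self b)).trans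
      (hC σ)⟩

theorem hausdorffDist_iterate_le [PseudoMetricSpace X] [BoundedSpace X] {n : ℕ} {C : ℝ}
    (hC : ∀ σ : ℕ → Λ, diam (range (seqComp w σ n)) ≤ C) {A B : Set X} (hA : A.Nonempty)
    (hB : B.Nonempty) : hausdorffDist ((HBset w)^[n] A) ((HBset w)^[n] B) ≤ C :=
  have hC_nonneg : 0 ≤ C := diam_nonneg.trans (hC fun _ => Classical.arbitrary Λ)
  hausdorffDist_le_of_mem_dist hC_nonneg (fun _ => exists_mem_iterate_dist_le hC hB)
    (fun _ => exists_mem_iterate_dist_le hC hA)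

theorem tendsto_hausdorffDist_iterate [TopologicalSpace Λ] [CompactSpace Λ] [PseudoMetricSpace X]
    [CompactSpace X] (hw : Continuous fun p : Λ × X => w p.1 p.2)
    (hdiam : ∀ σ : ℕ → Λ, Tendsto (fun n => diam (range (seqComp w σ n))) atTop (𝓝 0))
    {A B : Set X} (hA : A.Nonempty) (hB : B.Nonempty) :
    Tendsto (fun n => hausdorffDist ((HBset w)^[n] A) ((HBset w)^[n] B)) atTop (𝓝 0) := by
  refine Metric.tendsto_nhds.2 fun ε hε => ?_
  filter_upwards [Metric.tendstoUniformly_iff.1 (tendstoUniformly_diam_range_seqComp hw hdiam)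
    (ε / 2) (half_pos hε)] with n hn
  have hdiam_le (σ : ℕ → Λ) : diam (range (seqComp w σ n)) ≤ ε / 2 := by
    simpa [abs_of_nonneg diam_nonneg] using (hn σ).le
  rw [Real.dist_0_eq_abs, abs_of_nonneg hausdorffDist_nonneg]
  exact (hausdorffDist_iterate_le hdiam_le hA hB).trans_lt (half_lt_self hε)

end Iterates

section Attractor

variable {Λ X : Type*} {w : Λ → X → X}

/-- The attractor of the IFS `w`, encoded as the intersection of the decreasing sequence of sets
`Fⁿ(X)`, where `F = HBset w`. -/
def attractor (w : Λ → X → X) : Set X :=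
  ⋂ n, (HBset w)^[n] univ

variable [TopologicalSpace Λ] [CompactSpace Λ] [TopologicalSpace X] [CompactSpace X]

theorem isClosed_iterate_univ [T2Space X] (hw : Continuous fun p : Λ × X => w p.1 p.2) (n : ℕ) :
    IsClosed ((HBset w)^[n] univ) :=
  (isCompact_iterate hw isCompact_univ n).isClosed

theorem isCompact_attractor [T2Space X] (hw : Continuous fun p : Λ × X => w p.1 p.2) :
    IsCompact (attractor w) :=
  (isClosed_iInter (isClosed_iterate_univ hw)).isCompact

theorem nonempty_attractor [T2Space X] [Nonempty Λ] [Nonempty X]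
    (hw : Continuous fun p : Λ × X => w p.1 p.2) : (attractor w).Nonempty :=
  IsCompact.nonempty_iInter_of_sequence_nonempty_isCompact_isClosed _
    (fun n => antitone_iterate_univ w n.le_succ) (nonempty_iterate univ_nonempty) isCompact_univ
    (isClosed_iterate_univ hw)

theorem map_attractor [T2Space X] (hw : Continuous fun p : Λ × X => w p.1 p.2) :
    HBset w (attractor w) = attractor w :=
  calc HBset w (attractor w)
      = (fun p : Λ × X => w p.1 p.2) '' ⋂ n, univ ×ˢ (HBset w)^[n] univ := by
        rw [HBset, attractor, prod_iInter]
    _ = ⋂ n, HBset w ((HBset w)^[n] univ) :=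
        image_iInter_of_directed hw
          (Antitone.directed_ge fun _ _ h => prod_mono_right (antitone_iterate_univ w h))
          (fun n => isCompact_univ.prod (isCompact_iterate hw isCompact_univ n))
          (fun n => isClosed_univ.prod (isClosed_iterate_univ hw n))
    _ = ⋂ n, (HBset w)^[n + 1] univ := by simp only [Function.iterate_succ_apply']
    _ = attractor w := (antitone_iterate_univ w).iInf_nat_add 1

end Attractor

end HBset

theorem stmt_4_general {Λ X : Type*} [TopologicalSpace Λ] [CompactSpace Λ] [Nonempty Λ]
    [MetricSpace X] [CompactSpace X] [Nonempty X]
    (w : Λ → X → X) (hw : Continuous fun p : Λ × X => w p.1 p.2)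
    (hyp : ∀ σ : ℕ → Λ,
      Tendsto (fun n => diam (Set.range (seqComp w σ n))) atTop (𝓝 0)) :
    ∃ K : Set X, K.Nonempty ∧ IsCompact K ∧ HBset w K = K ∧
      ∀ B : Set X, B.Nonempty →
        Tendsto (fun n => hausdorffDist ((HBset w)^[n] B) K) atTop (𝓝 0) := by
  have hK : (HBset.attractor w).Nonempty := HBset.nonempty_attractor hw
  have hinv : HBset w (HBset.attractor w) = HBset.attractor w := HBset.map_attractor hw
  refine ⟨HBset.attractor w, hK, HBset.isCompact_attractor hw, hinv, fun B hB => ?_⟩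
  simpa only [Function.iterate_fixed hinv] using
    HBset.tendsto_hausdorffDist_iterate hw hyp hB hK

/-- A weakly hyperbolic IFS on a nonempty compact metric space has a global
attractor which is a compact invariant set. -/
theorem stmt_4 {Λ X : Type*} [MetricSpace Λ] [CompactSpace Λ] [Nonempty Λ]
    [MetricSpace X] [CompactSpace X] [Nonempty X]
    (w : Λ → X → X) (hw : Continuous fun p : Λ × X => w p.1 p.2)
    (hyp : ∀ σ : ℕ → Λ,
      Tendsto (fun n => diam (Set.range (seqComp w σ n))) atTop (𝓝 0)) :
    ∃ K : Set X, K.Nonempty ∧ IsCompact K ∧ HBset w K = K ∧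
      ∀ B : Set X, B.Nonempty → IsCompact B →
        Tendsto (fun n => hausdorffDist ((HBset w)^[n] B) K) atTop (𝓝 0) := by
  obtain ⟨K, hK, hK_compact, hK_inv, hK_lim⟩ := stmt_4_general w hw hyp
  exact ⟨K, hK, hK_compact, hK_inv, fun B hB _ => hK_lim B hB⟩
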